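/- arXiv:2406.09118 — 5 statements merged into one kernel-verified Lean document; each statement's English description precedes it below -/
import Mathlib

section
/- Let D ⊂ ℝ^d be open and bounded, let f : ℝ^d → ℝ be continuously differentiable, and let V : ℝ^d → ℝ^d be a continuously differentiable vector field whose support is a compact subset of D. For t ≥ 0 set F_t(x) := x + t·V(x). Then for every r ≥ 0 the map t ↦ f ∘ F_t is differentiable at r in the L¹(D)-sense, i.e. lim_{t→0} ∫_D | (f(F_{r+t}(x)) − f(F_r(x)))/t − ∇f(F_r(x))·V(x) | dx = 0. -/
/-!
Fix `x`. By the chain rule `s ↦ f (x + s • V x)` has derivative `f' (x + s • V x) (V x)`, so the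
integrand tends to `0` pointwise. This derivative is jointly continuous in `(s, x)`, hence bounded
for `s` near `r` and `x` in the compact support of `V`; by the mean value inequality the same bound
holds for the difference quotients, and dominated convergence applies. Off the support of `V` the
integrand vanishes.
-/

open MeasureTheory Filter Topology

section DifferenceQuotient

variable {𝕜 F : Type*} [RCLike 𝕜] [NormedAddCommGroup F] [NormedSpace 𝕜 F]

lemma norm_inv_smul_sub_le_of_norm_hasDerivWithin_le {g g' : 𝕜 → F} {s : Set 𝕜} {r t : 𝕜}
    {C : ℝ} (hs : Convex ℝ s) (hg : ∀ u ∈ s, HasDerivWithinAt g (g' u) s u)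
    (hC : ∀ u ∈ s, ‖g' u‖ ≤ C) (hr : r ∈ s) (hrt : r + t ∈ s) : ‖t⁻¹ • (g (r + t) - g r)‖ ≤ C := by
  have hmvt : ‖g (r + t) - g r‖ ≤ ‖t‖ * C := by
    simpa [mul_comm] using hs.norm_image_sub_le_of_norm_hasDerivWithin_le hg hC hr hrt
  rw [norm_smul, norm_inv]
  exact inv_mul_le_of_le_mul₀ (norm_nonneg t) ((norm_nonneg _).trans (hC r hr)) hmvt

theorem tendsto_integral_norm_slope_sub_deriv_of_dominated {α : Type*} [MeasurableSpace α]
    {μ : Measure α} {g g' : 𝕜 → α → F} {r : 𝕜} {s : Set 𝕜} {bound : α → ℝ} (hs : s ∈ 𝓝 r)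
    (hg_meas : ∀ u ∈ s, AEStronglyMeasurable (g u) μ) (hg'_meas : AEStronglyMeasurable (g' r) μ)
    (hbound : ∀ᵐ x ∂μ, ∀ u ∈ s, ‖g' u x‖ ≤ bound x) (hbound_int : Integrable bound μ)
    (hg : ∀ᵐ x ∂μ, ∀ u ∈ s, HasDerivAt (g · x) (g' u x) u) :
    Tendsto (fun t => ∫ x, ‖t⁻¹ • (g (r + t) x - g r x) - g' r x‖ ∂μ) (𝓝[≠] 0) (𝓝 0) := by
  obtain ⟨ε, hε, hball⟩ := Metric.mem_nhds_iff.1 hs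
  have hr : r ∈ Metric.ball r ε := Metric.mem_ball_self hε
  have hnear : ∀ᶠ t in 𝓝[≠] (0 : 𝕜), r + t ∈ Metric.ball r ε := by
    filter_upwards [nhdsWithin_le_nhds (Metric.ball_mem_nhds 0 hε)] with t ht
    simpa using ht
  rw [← integral_zero α ℝ (μ := μ)]
  refine tendsto_integral_filter_of_dominated_convergence (fun x => bound x + bound x) ?_ ?_
    (hbound_int.add hbound_int) ?_
  · filter_upwards [hnear] with t ht
    exact ((((hg_meas _ (hball ht)).sub (hg_meas r (hball hr))).const_smul t⁻¹).sub hg'_meas).norm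
  · filter_upwards [hnear] with t ht
    filter_upwards [hbound, hg] with x hx hgx
    have hslope : ‖t⁻¹ • (g (r + t) x - g r x)‖ ≤ bound x :=
      norm_inv_smul_sub_le_of_norm_hasDerivWithin_le (convex_ball r ε)
        (fun u hu => (hgx u (hball hu)).hasDerivWithinAt) (fun u hu => hx u (hball hu)) hr ht
    rw [norm_norm]
    exact (norm_sub_le _ _).trans (add_le_add hslope (hx r (hball hr)))
  · filter_upwards [hg] with x hgx
    exact tendsto_iff_norm_sub_tendsto_zero.1 (hgx r (hball hr)).tendsto_slope_zero

end DifferenceQuotient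

section Perturbation

variable {𝕜 E F : Type*} [RCLike 𝕜] [NormedAddCommGroup E] [NormedSpace 𝕜 E]
  [NormedAddCommGroup F] [NormedSpace 𝕜 F] {f : E → F} {V : E → E}

lemma hasDerivAt_comp_add_smul {x v : E} {s : 𝕜} (hf : DifferentiableAt 𝕜 f (x + s • v)) :
    HasDerivAt (fun u : 𝕜 => f (x + u • v)) (fderiv 𝕜 f (x + s • v) v) s := by
  have hline : HasDerivAt (fun u : 𝕜 => x + u • v) v s := by
    simpa using ((hasDerivAt_id s).smul_const v).const_add x
  exact hf.hasFDerivAt.comp_hasDerivAt s hline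

lemma continuous_fderiv_add_smul_apply (hf : ContDiff 𝕜 1 f) (hV : Continuous V) :
    Continuous fun p : 𝕜 × E => fderiv 𝕜 f (p.2 + p.1 • V p.2) (V p.2) :=
  ((hf.continuous_fderiv one_ne_zero).comp (by fun_prop)).clm_apply (by fun_prop)

variable [MeasurableSpace E] [OpensMeasurableSpace E] {μ : Measure E} [IsFiniteMeasureOnCompacts μ]

theorem tendsto_setIntegral_norm_slope_sub_fderiv_add_smul {K : Set E} (hK : IsCompact K)
    (hf : ContDiff 𝕜 1 f) (hV : Continuous V) (r : 𝕜) :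
    Tendsto (fun t : 𝕜 => ∫ x in K, ‖t⁻¹ • (f (x + (r + t) • V x) - f (x + r • V x))
      - fderiv 𝕜 f (x + r • V x) (V x)‖ ∂μ) (𝓝[≠] 0) (𝓝 0) := by
  have hfc : Continuous f := hf.continuous
  have hf'V := continuous_fderiv_add_smul_apply hf hV
  have aesm {h : E → F} (hh : Continuous h) : AEStronglyMeasurable h (μ.restrict K) :=
    hh.continuousOn.aestronglyMeasurable_of_isCompact hK hK.measurableSet
  obtain ⟨C, hC⟩ := ((isCompact_closedBall r 1).prod hK).exists_bound_of_continuousOn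
    hf'V.continuousOn
  refine tendsto_integral_norm_slope_sub_deriv_of_dominated (bound := fun _ => C)
    (g := fun s x => f (x + s • V x)) (g' := fun s x => fderiv 𝕜 f (x + s • V x) (V x))
    (Metric.closedBall_mem_nhds r one_pos) (fun s _ => aesm (by fun_prop))
    (aesm (hf'V.comp (Continuous.prodMk_right r))) ?_
    (integrableOn_const hK.measure_lt_top.ne) ?_
  · filter_upwards [ae_restrict_mem hK.measurableSet] with x hx s hs
    exact hC (s, x) ⟨hs, hx⟩
  · exact .of_forall fun x s _ => hasDerivAt_comp_add_smul (hf.differentiable one_ne_zero _)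

theorem stmt_0_general (hf : ContDiff 𝕜 1 f) (hV : Continuous V) (hVc : HasCompactSupport V)
    (r : 𝕜) :
    Tendsto (fun t : 𝕜 => ∫ x, ‖t⁻¹ • (f (x + (r + t) • V x) - f (x + r • V x))
      - fderiv 𝕜 f (x + r • V x) (V x)‖ ∂μ) (𝓝[≠] 0) (𝓝 0) := by
  refine (tendsto_setIntegral_norm_slope_sub_fderiv_add_smul hVc.isCompact hf hV r).congr fun t =>
    setIntegral_eq_integral_of_forall_compl_eq_zero fun x hx => ?_
  simp [image_eq_zero_of_notMem_tsupport hx]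

end Perturbation

/-- L¹-differentiability of `t ↦ f ∘ F_t` for the perturbation of identity
`F_t(x) = x + t • V x`, where `f` is `C¹` and `V` is a `C¹` vector field with compact support
contained in the open bounded set `D`. -/
theorem stmt_0 (d : ℕ) (D : Set (EuclideanSpace ℝ (Fin d)))
    (hD : IsOpen D) (hDb : Bornology.IsBounded D)
    (f : EuclideanSpace ℝ (Fin d) → ℝ) (hf : ContDiff ℝ 1 f)
    (V : EuclideanSpace ℝ (Fin d) → EuclideanSpace ℝ (Fin d)) (hV : ContDiff ℝ 1 V)
    (hVcomp : IsCompact (tsupport V)) (hVsub : tsupport V ⊆ D) :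
    ∀ r : ℝ, 0 ≤ r →
      Tendsto
        (fun t : ℝ => ∫ x in D,
          |(f (x + (r + t) • V x) - f (x + r • V x)) / t - fderiv ℝ f (x + r • V x) (V x)|)
        (𝓝[≠] 0) (𝓝 0) := by
  intro r _
  simpa only [Real.norm_eq_abs, smul_eq_mul, div_eq_inv_mul] using
    stmt_0_general (μ := volume.restrict D) hf hV.continuous hVcomp r
end

section
/- Let Ω and I be disjoint measurable subsets of ℝ^d, let γ : ℝ^d × ℝ^d → [0,∞) be measurable, and let u, v : Ω ∪ I → ℝ be measurable functions with v = 0 on I. Assume that the functions (x,y) ↦ v(x)(u(x)γ(x,y) − u(y)γ(y,x)) and (x,y) ↦ (v(x) − v(y))(u(x)γ(x,y) − u(y)γ(y,x)) are integrable over (Ω ∪ I) × (Ω ∪ I). Then ∫_Ω ∫_{Ω∪I} v(x)(u(x)γ(x,y) − u(y)γ(y,x)) dy dx = (1/2) ∫_{Ω∪I} ∫_{Ω∪I} (v(x) − v(y))(u(x)γ(x,y) − u(y)γ(y,x)) dy dx. -/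
open MeasureTheory Filter Topology

/-!
Since `v` vanishes off `Ω`, the outer integral may be taken over all of `Ω ∪ I`. The flux
`g x y = u x * γ x y - u y * γ y x` is antisymmetric, so `(v x - v y) * g x y` is the sum of
`v x * g x y` and its transpose `v y * g y x`, and by Fubini the two have the same double integral.
-/

section Antisymmetric

variable {α E : Type*} [MeasurableSpace α] {μ : Measure α} [SFinite μ]
  [NormedAddCommGroup E] [NormedSpace ℝ E]

theorem integral_integral_add_swap {f : α → α → E}
    (hf : Integrable (Function.uncurry f) (μ.prod μ)) :
    ∫ x, ∫ y, (f x y + f y x) ∂μ ∂μ = (2 : ℝ) • ∫ x, ∫ y, f x y ∂μ ∂μ :=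
  calc
    ∫ x, ∫ y, (f x y + f y x) ∂μ ∂μ = ∫ x, ∫ y, f x y ∂μ ∂μ + ∫ x, ∫ y, f y x ∂μ ∂μ :=
      integral_integral_add hf hf.swap
    _ = (2 : ℝ) • ∫ x, ∫ y, f x y ∂μ ∂μ := by
      rw [← integral_integral_swap hf, two_smul]

variable {R : Type*} [Ring R] [Module R E] {v : α → R} {g : α → α → E}

theorem integral_integral_sub_smul_of_antisymm (hg : ∀ x y, g y x = -g x y)
    (hvg : Integrable (fun p : α × α => v p.1 • g p.1 p.2) (μ.prod μ)) :
    ∫ x, ∫ y, (v x - v y) • g x y ∂μ ∂μ = (2 : ℝ) • ∫ x, ∫ y, v x • g x y ∂μ ∂μ := by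
  have sub_smul_eq (x y : α) : (v x - v y) • g x y = v x • g x y + v y • g y x := by
    rw [hg x y, smul_neg, sub_smul, sub_eq_add_neg]
  simp only [sub_smul_eq]
  exact integral_integral_add_swap hvg

theorem stmt_5_general {s t : Set α} (ht : MeasurableSet t) (hst : s ⊆ t)
    (hv : ∀ x ∈ t \ s, v x = 0) (hg : ∀ x y, g y x = -g x y)
    (hvg : IntegrableOn (fun p : α × α => v p.1 • g p.1 p.2) (t ×ˢ t) (μ.prod μ)) :
    ∫ x in s, ∫ y in t, v x • g x y ∂μ ∂μ
      = (1 / 2 : ℝ) • ∫ x in t, ∫ y in t, (v x - v y) • g x y ∂μ ∂μ := by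
  have extend_outer : ∫ x in t, ∫ y in t, v x • g x y ∂μ ∂μ
      = ∫ x in s, ∫ y in t, v x • g x y ∂μ ∂μ :=
    setIntegral_eq_of_subset_of_forall_sdiff_eq_zero ht hst fun x hx => by
      simp only [hv x hx, zero_smul, integral_zero]
  rw [IntegrableOn, ← Measure.prod_restrict] at hvg
  rw [integral_integral_sub_smul_of_antisymm hg hvg, extend_outer, smul_smul,
    one_div_mul_cancel two_ne_zero, one_smul]

end Antisymmetric

/-- Symmetrized (Fubini) reformulation of the nonlocal bilinear pairing:
for disjoint measurable `Ω`, `I`, a nonnegative measurable kernel `γ`, and measurable `u`, `v`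
with `v = 0` on `I`, assuming integrability of both integrands over `(Ω ∪ I) × (Ω ∪ I)`,
`∫_Ω ∫_{Ω∪I} v(x)(u(x)γ(x,y) − u(y)γ(y,x)) dy dx
  = (1/2) ∫_{Ω∪I} ∫_{Ω∪I} (v(x) − v(y))(u(x)γ(x,y) − u(y)γ(y,x)) dy dx`. -/
theorem stmt_5 (d : ℕ) (Ω I : Set (EuclideanSpace ℝ (Fin d)))
    (hΩ : MeasurableSet Ω) (hI : MeasurableSet I) (hdisj : Disjoint Ω I)
    (γ : EuclideanSpace ℝ (Fin d) → EuclideanSpace ℝ (Fin d) → ℝ)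
    (hγ0 : ∀ x y, 0 ≤ γ x y)
    (hγm : Measurable (fun p : EuclideanSpace ℝ (Fin d) × EuclideanSpace ℝ (Fin d) =>
      γ p.1 p.2))
    (u v : EuclideanSpace ℝ (Fin d) → ℝ) (hu : Measurable u) (hv : Measurable v)
    (hvI : ∀ x ∈ I, v x = 0)
    (hint1 : IntegrableOn
      (fun p : EuclideanSpace ℝ (Fin d) × EuclideanSpace ℝ (Fin d) =>
        v p.1 * (u p.1 * γ p.1 p.2 - u p.2 * γ p.2 p.1)) ((Ω ∪ I) ×ˢ (Ω ∪ I)))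
    (hint2 : IntegrableOn
      (fun p : EuclideanSpace ℝ (Fin d) × EuclideanSpace ℝ (Fin d) =>
        (v p.1 - v p.2) * (u p.1 * γ p.1 p.2 - u p.2 * γ p.2 p.1)) ((Ω ∪ I) ×ˢ (Ω ∪ I))) :
    ∫ x in Ω, ∫ y in Ω ∪ I, v x * (u x * γ x y - u y * γ y x)
      = (1/2 : ℝ) * ∫ x in Ω ∪ I, ∫ y in Ω ∪ I, (v x - v y) * (u x * γ x y - u y * γ y x) :=
  stmt_5_general (hΩ.union hI) Set.subset_union_left
    (fun x hx => hvI x (hx.1.resolve_left hx.2)) (fun _ _ => (neg_sub _ _).symm) hint1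
end

section
/- Let d ∈ ℕ, s ∈ (0,1), and p := d + 2s. Let σ : ℝ^d × ℝ^d → [0,∞) be continuously differentiable with σ and its gradient bounded, and let V : ℝ^d → ℝ^d be bounded and Lipschitz continuous. Define γ(x,y) := σ(x,y)/‖x−y‖₂^p for x ≠ y. Then there exists a constant C > 0 such that for all x ≠ y: | ∇_x γ(x,y)·V(x) + ∇_y γ(x,y)·V(y) | · ‖x − y‖₂^{p} ≤ C. -/
/-!
Along the pair field `(V x, V y)` the two partial derivatives of `γ` add up to the total derivative,
and the singular factor `‖x - y‖ ^ (-p)`, being a function of `x - y` alone, only sees the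
difference `V x - V y`. Its derivative is of size `|p| ‖x - y‖ ^ (-p - 1)`, and the Lipschitz bound
on `V x - V y` absorbs the extra power of `‖x - y‖`.
-/

open MeasureTheory Filter Topology

section Calculus

variable {𝕜 E F G : Type*} [NontriviallyNormedField 𝕜]
  [NormedAddCommGroup E] [NormedSpace 𝕜 E] [NormedAddCommGroup F] [NormedSpace 𝕜 F]
  [NormedAddCommGroup G] [NormedSpace 𝕜 G]

lemma fderiv_prodMk_left_apply_add_fderiv_prodMk_right_apply {f : E × F → G} {x : E} {y : F}
    (hf : DifferentiableAt 𝕜 f (x, y)) (v : E) (w : F) :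
    fderiv 𝕜 (fun x' => f (x', y)) x v + fderiv 𝕜 (fun y' => f (x, y')) y w =
      fderiv 𝕜 f (x, y) (v, w) := by
  have hx : HasFDerivAt (fun x' => f (x', y)) _ x :=
    hf.hasFDerivAt.comp x (hasFDerivAt_prodMk_left x y)
  have hy : HasFDerivAt (fun y' => f (x, y')) _ y :=
    hf.hasFDerivAt.comp y (hasFDerivAt_prodMk_right x y)
  rw [hx.fderiv, hy.fderiv]
  simp [← map_add]

lemma hasFDerivAt_mul_comp_sub {A : Type*} [NormedCommRing A] [NormedAlgebra 𝕜 A]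
    {a : E × E → A} {g : E → A} {a' : E × E →L[𝕜] A} {g' : E →L[𝕜] A} {q : E × E}
    (ha : HasFDerivAt a a' q) (hg : HasFDerivAt g g' (q.1 - q.2)) :
    HasFDerivAt (fun r => a r * g (r.1 - r.2))
      (a q • g' ∘L (.fst 𝕜 E E - .snd 𝕜 E E) + g (q.1 - q.2) • a') q :=
  ha.mul (hg.comp q (hasFDerivAt_fst.sub hasFDerivAt_snd))

end Calculus

section NormRpow

variable {E : Type*} [NormedAddCommGroup E] [NormedSpace ℝ E]

lemma differentiableAt_norm_rpow_of_ne_zero {z : E} (hz : z ≠ 0)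
    (hnorm : DifferentiableAt ℝ (‖·‖) z) (p : ℝ) :
    DifferentiableAt ℝ (fun z' : E => ‖z'‖ ^ p) z :=
  hnorm.rpow_const (.inl (norm_ne_zero_iff.2 hz))

lemma norm_fderiv_norm_rpow_le_of_ne_zero {z : E} (hz : z ≠ 0)
    (hnorm : DifferentiableAt ℝ (‖·‖) z) (p : ℝ) :
    ‖fderiv ℝ (fun z' : E => ‖z'‖ ^ p) z‖ ≤ |p| * ‖z‖ ^ (p - 1) := by
  have hnorm_le : ‖fderiv ℝ (‖·‖) z‖ ≤ (1 : NNReal) :=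
    norm_fderiv_le_of_lipschitz ℝ lipschitzWith_one_norm
  rw [(hnorm.hasFDerivAt.rpow_const (.inl (norm_ne_zero_iff.2 hz))).fderiv, norm_smul, norm_mul,
    Real.norm_eq_abs, Real.norm_of_nonneg (by positivity)]
  exact mul_le_of_le_one_right (by positivity) hnorm_le

end NormRpow

/-- The fractional-type kernel `γ(x, y) = σ(x, y) / ‖x - y‖ ^ p`, as a function of the pair
`(x, y)`. For `p ≠ 0` it takes the junk value `0` on the diagonal. -/
noncomputable def singularKernel {E : Type*} [NormedAddCommGroup E] (σ : E × E → ℝ) (p : ℝ)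
    (q : E × E) : ℝ :=
  σ q / ‖q.1 - q.2‖ ^ p

section SingularKernel

variable {E : Type*} [NormedAddCommGroup E]

lemma singularKernel_eq_mul_norm_rpow_neg (σ : E × E → ℝ) (p : ℝ) :
    singularKernel σ p = fun q => σ q * ‖q.1 - q.2‖ ^ (-p) := by
  ext q
  rw [singularKernel, Real.rpow_neg (norm_nonneg _), div_eq_mul_inv]

variable [NormedSpace ℝ E] {σ : E × E → ℝ} {x y : E}

lemma hasFDerivAt_singularKernel (hσ : DifferentiableAt ℝ σ (x, y)) (hxy : x ≠ y)
    (hnorm : DifferentiableAt ℝ (‖·‖) (x - y)) (p : ℝ) :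
    HasFDerivAt (singularKernel σ p)
      (σ (x, y) • fderiv ℝ (fun z : E => ‖z‖ ^ (-p)) (x - y) ∘L (.fst ℝ E E - .snd ℝ E E) +
        ‖x - y‖ ^ (-p) • fderiv ℝ σ (x, y)) (x, y) := by
  rw [singularKernel_eq_mul_norm_rpow_neg]
  exact hasFDerivAt_mul_comp_sub hσ.hasFDerivAt
    (differentiableAt_norm_rpow_of_ne_zero (sub_ne_zero.2 hxy) hnorm (-p)).hasFDerivAt

lemma abs_fderiv_singularKernel_apply_mul_norm_rpow_le (hσ : DifferentiableAt ℝ σ (x, y))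
    (hxy : x ≠ y) (hnorm : DifferentiableAt ℝ (‖·‖) (x - y)) (p : ℝ) (v w : E) :
    |fderiv ℝ (singularKernel σ p) (x, y) (v, w)| * ‖x - y‖ ^ p ≤
      |σ (x, y)| * (|p| * (‖v - w‖ / ‖x - y‖)) + ‖fderiv ℝ σ (x, y)‖ * ‖(v, w)‖ := by
  have hz : x - y ≠ 0 := sub_ne_zero.2 hxy
  have hr : 0 < ‖x - y‖ := norm_pos_iff.2 hz
  set L := fderiv ℝ (fun z : E => ‖z‖ ^ (-p)) (x - y)
  have hL : |L (v - w)| ≤ |p| * ‖x - y‖ ^ (-p - 1) * ‖v - w‖ := by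
    simpa using L.le_of_opNorm_le (norm_fderiv_norm_rpow_le_of_ne_zero hz hnorm (-p)) (v - w)
  have hDσ : |fderiv ℝ σ (x, y) (v, w)| ≤ ‖fderiv ℝ σ (x, y)‖ * ‖(v, w)‖ :=
    (fderiv ℝ σ (x, y)).le_opNorm _
  calc |fderiv ℝ (singularKernel σ p) (x, y) (v, w)| * ‖x - y‖ ^ p
      = |σ (x, y) * L (v - w) + ‖x - y‖ ^ (-p) * fderiv ℝ σ (x, y) (v, w)| * ‖x - y‖ ^ p := by
        simp [(hasFDerivAt_singularKernel hσ hxy hnorm p).fderiv, L]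
    _ ≤ (|σ (x, y)| * |L (v - w)| + ‖x - y‖ ^ (-p) * |fderiv ℝ σ (x, y) (v, w)|) *
          ‖x - y‖ ^ p := by
        gcongr
        refine (abs_add_le _ _).trans_eq ?_
        rw [abs_mul, abs_mul, abs_of_nonneg (Real.rpow_nonneg hr.le (-p))]
    _ ≤ (|σ (x, y)| * (|p| * ‖x - y‖ ^ (-p - 1) * ‖v - w‖) +
          ‖x - y‖ ^ (-p) * (‖fderiv ℝ σ (x, y)‖ * ‖(v, w)‖)) * ‖x - y‖ ^ p := by
        gcongr
    _ = |σ (x, y)| * (|p| * (‖v - w‖ / ‖x - y‖)) + ‖fderiv ℝ σ (x, y)‖ * ‖(v, w)‖ := by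
        rw [Real.rpow_sub_one hr.ne', Real.rpow_neg hr.le]
        field_simp

end SingularKernel

theorem stmt_8_general {E : Type*} [NormedAddCommGroup E] [NormedSpace ℝ E]
    (hnorm : ∀ z : E, z ≠ 0 → DifferentiableAt ℝ (‖·‖) z) (p : ℝ) {σ : E × E → ℝ}
    (hσ : Differentiable ℝ σ) {M M' : ℝ} (hσb : ∀ q, |σ q| ≤ M) (hσd : ∀ q, ‖fderiv ℝ σ q‖ ≤ M')
    {V : E → E} {MV : ℝ} (hVb : ∀ x, ‖V x‖ ≤ MV) {K : NNReal} (hVL : LipschitzWith K V)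
    {x y : E} (hxy : x ≠ y) :
    |fderiv ℝ (fun x' => σ (x', y) / ‖x' - y‖ ^ p) x (V x)
        + fderiv ℝ (fun y' => σ (x, y') / ‖x - y'‖ ^ p) y (V y)| * ‖x - y‖ ^ p ≤
      M * (|p| * K) + M' * MV := by
  have hz : x - y ≠ 0 := sub_ne_zero.2 hxy
  have hγ := (hasFDerivAt_singularKernel (hσ (x, y)) hxy (hnorm _ hz) p).differentiableAt
  have hV : ‖V x - V y‖ / ‖x - y‖ ≤ K :=
    div_le_of_le_mul₀ (norm_nonneg _) K.coe_nonneg (hVL.norm_sub_le x y)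
  have hM : 0 ≤ M := (abs_nonneg _).trans (hσb (x, y))
  have hM' : 0 ≤ M' := (norm_nonneg _).trans (hσd (x, y))
  calc _ = |fderiv ℝ (singularKernel σ p) (x, y) (V x, V y)| * ‖x - y‖ ^ p := by
        rw [← fderiv_prodMk_left_apply_add_fderiv_prodMk_right_apply hγ]; rfl
    _ ≤ |σ (x, y)| * (|p| * (‖V x - V y‖ / ‖x - y‖)) +
          ‖fderiv ℝ σ (x, y)‖ * ‖(V x, V y)‖ :=
        abs_fderiv_singularKernel_apply_mul_norm_rpow_le (hσ _) hxy (hnorm _ hz) p _ _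
    _ ≤ M * (|p| * K) + M' * MV := by
        gcongr
        exacts [hσb _, hσd _, max_le (hVb x) (hVb y)]

/-- First-order kernel estimate: for `γ(x,y) = σ(x,y)/‖x−y‖^{d+2s}` with
`σ ≥ 0` of class `C¹` with `σ` and `∇σ` bounded, and `V` bounded and Lipschitz, there is
`C > 0` with `|∇_x γ(x,y)·V(x) + ∇_y γ(x,y)·V(y)| · ‖x−y‖^{d+2s} ≤ C` for all `x ≠ y`. -/
theorem stmt_8 (d : ℕ) (s : ℝ) (hs : s ∈ Set.Ioo (0:ℝ) 1)
    (σ : EuclideanSpace ℝ (Fin d) × EuclideanSpace ℝ (Fin d) → ℝ)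
    (hσ0 : ∀ q, 0 ≤ σ q) (hσ : ContDiff ℝ 1 σ)
    (M : ℝ) (hσb : ∀ q, |σ q| ≤ M) (hσd : ∀ q, ‖fderiv ℝ σ q‖ ≤ M)
    (V : EuclideanSpace ℝ (Fin d) → EuclideanSpace ℝ (Fin d))
    (MV : ℝ) (hVb : ∀ x, ‖V x‖ ≤ MV) (K : NNReal) (hVL : LipschitzWith K V) :
    ∃ C : ℝ, 0 < C ∧ ∀ x y : EuclideanSpace ℝ (Fin d), x ≠ y →
      |fderiv ℝ (fun x' => σ (x', y) / ‖x' - y‖ ^ ((d:ℝ) + 2*s)) x (V x)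
          + fderiv ℝ (fun y' => σ (x, y') / ‖x - y'‖ ^ ((d:ℝ) + 2*s)) y (V y)|
        * ‖x - y‖ ^ ((d:ℝ) + 2*s) ≤ C := by
  exact ⟨max _ 1, lt_max_of_lt_right one_pos, fun x y hxy => le_max_of_le_left <|
    stmt_8_general (fun _ => differentiableAt_id.norm ℝ) _ (hσ.differentiable one_ne_zero)
      hσb hσd hVb hVL hxy⟩
end

section
/- Let d ∈ ℕ, s ∈ (0,1), and p := d + 2s. Let σ : ℝ^d × ℝ^d → [0,∞) be twice continuously differentiable with σ and all its first and second partial derivatives bounded, and let V, W : ℝ^d → ℝ^d be bounded Lipschitz continuous vector fields. Define γ(x,y) := σ(x,y)/‖x−y‖₂^p for x ≠ y. Then there exists a constant C > 0 such that for all x ≠ y: | D²γ(x,y)[(V(x),V(y)),(W(x),W(y))] | · ‖x − y‖₂^{p} ≤ C, where D²γ(x,y)[·,·] denotes the second derivative of γ at (x,y) viewed as a bilinear form on ℝ^d × ℝ^d. -/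
open MeasureTheory Filter Topology

/-!
Write `z = x - y`. The factor `‖x - y‖ ^ (-p)` depends on `(x, y)` only through `z`, so the Hessian
of `γ` applied to `(V x, V y)` and `(W x, W y)` sees it through its derivatives at `z` in the
directions `V x - V y` and `W x - W y`. Each derivative of `‖z‖ ^ (-p)` costs a factor `‖z‖⁻¹`, and
Lipschitz continuity gives it back, as `‖V x - V y‖ ≤ K ‖z‖`; hence every term of the product rule
is `O(‖z‖ ^ (-p))`.
-/

section SecondDerivative

variable {𝕜 E F : Type*} [NontriviallyNormedField 𝕜] [NormedAddCommGroup E] [NormedSpace 𝕜 E]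
  [NormedAddCommGroup F] [NormedSpace 𝕜 F]

lemma eventually_differentiableAt_of_contDiffAt_two {f : E → F} {x : E} (hf : ContDiffAt 𝕜 2 f x) :
    ∀ᶠ y in 𝓝 x, DifferentiableAt 𝕜 f y :=
  (hf.eventually (by simp)).mono fun _ hy ↦ hy.differentiableAt two_ne_zero

lemma hasFDerivAt_fderiv_of_contDiffAt_two {f : E → F} {x : E} (hf : ContDiffAt 𝕜 2 f x) :
    HasFDerivAt (fderiv 𝕜 f) (fderiv 𝕜 (fderiv 𝕜 f) x) x :=
  ((hf.fderiv_right (m := 1) (by norm_num)).differentiableAt one_ne_zero).hasFDerivAt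

lemma fderiv_fderiv_smul_apply {c : E → 𝕜} {f : E → F} {x : E} (hc : ContDiffAt 𝕜 2 c x)
    (hf : ContDiffAt 𝕜 2 f x) (v w : E) :
    fderiv 𝕜 (fderiv 𝕜 (fun y ↦ c y • f y)) x v w =
      c x • fderiv 𝕜 (fderiv 𝕜 f) x v w + fderiv 𝕜 c x v • fderiv 𝕜 f x w +
        fderiv 𝕜 c x w • fderiv 𝕜 f x v + fderiv 𝕜 (fderiv 𝕜 c) x v w • f x := by
  have first_derivative : fderiv 𝕜 (fun y ↦ c y • f y) =ᶠ[𝓝 x]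
      fun y ↦ c y • fderiv 𝕜 f y + ContinuousLinearMap.smulRightL 𝕜 E F (fderiv 𝕜 c y) (f y) := by
    filter_upwards [eventually_differentiableAt_of_contDiffAt_two hc,
      eventually_differentiableAt_of_contDiffAt_two hf] with y hcy hfy
    exact fderiv_fun_smul hcy hfy
  have second_derivative :=
    ((hc.differentiableAt two_ne_zero).hasFDerivAt.fun_smul
      (hasFDerivAt_fderiv_of_contDiffAt_two hf)).fun_add
      ((ContinuousLinearMap.smulRightL 𝕜 E F).hasFDerivAt_of_bilinear
        (hasFDerivAt_fderiv_of_contDiffAt_two hc) (hf.differentiableAt two_ne_zero).hasFDerivAt)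
  rw [first_derivative.fderiv_eq, second_derivative.fderiv]
  simp [add_assoc]

lemma fderiv_fderiv_comp_continuousLinearMap_apply {G : Type*} [NormedAddCommGroup G]
    [NormedSpace 𝕜 G] {f : F → G} (L : E →L[𝕜] F) {x : E} (hf : ContDiffAt 𝕜 2 f (L x)) (v w : E) :
    fderiv 𝕜 (fderiv 𝕜 (fun y ↦ f (L y))) x v w = fderiv 𝕜 (fderiv 𝕜 f) (L x) (L v) (L w) := by
  have first_derivative : fderiv 𝕜 (fun y ↦ f (L y)) =ᶠ[𝓝 x]
      fun y ↦ (fderiv 𝕜 f (L y)).comp L := by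
    filter_upwards [L.continuous.continuousAt.eventually
      (eventually_differentiableAt_of_contDiffAt_two hf)] with y hy
    exact (hy.hasFDerivAt.comp y L.hasFDerivAt).fderiv
  have second_derivative : HasFDerivAt (fun y ↦ (fderiv 𝕜 f (L y)).comp L) _ x :=
    ((hasFDerivAt_fderiv_of_contDiffAt_two hf).comp x L.hasFDerivAt).clm_comp
      (hasFDerivAt_const L x)
  rw [first_derivative.fderiv_eq, second_derivative.fderiv]
  simp

end SecondDerivative

section NormRpow

variable {E : Type*} [NormedAddCommGroup E] [InnerProductSpace ℝ E] {z : E}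

lemma hasFDerivAt_norm_rpow_of_ne_zero (p : ℝ) (hz : z ≠ 0) :
    HasFDerivAt (fun x : E ↦ ‖x‖ ^ p) ((p * ‖z‖ ^ (p - 2)) • innerSL ℝ z) z := by
  have sq_rpow_half (r : ℝ) (x : E) : (‖x‖ ^ 2) ^ (r / 2) = ‖x‖ ^ r := by
    rw [← Real.rpow_natCast_mul (norm_nonneg x), Nat.cast_ofNat, mul_div_cancel₀ r two_ne_zero]
  have deriv_sq_rpow := (hasFDerivAt_id z).norm_sq.rpow_const (p := p / 2) (.inl (by simp [hz]))
  simp only [id, sq_rpow_half, show p / 2 - 1 = (p - 2) / 2 by ring] at deriv_sq_rpow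
  refine deriv_sq_rpow.congr_fderiv ?_
  ext v
  simp only [smul_apply, ContinuousLinearMap.comp_id, nsmul_eq_mul, smul_eq_mul, Nat.cast_ofNat]
  ring

lemma contDiffAt_norm_rpow_of_ne_zero (p : ℝ) (hz : z ≠ 0) {n : WithTop ℕ∞} :
    ContDiffAt ℝ n (fun x : E ↦ ‖x‖ ^ p) z :=
  (contDiffAt_norm ℝ hz).rpow_const_of_ne (norm_ne_zero_iff.2 hz)

lemma norm_fderiv_norm_rpow_of_ne_zero (p : ℝ) (hz : z ≠ 0) :
    ‖fderiv ℝ (fun x : E ↦ ‖x‖ ^ p) z‖ = |p| * ‖z‖ ^ (p - 1) := by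
  have hz' : ‖z‖ ≠ 0 := norm_ne_zero_iff.2 hz
  rw [(hasFDerivAt_norm_rpow_of_ne_zero p hz).fderiv, norm_smul, innerSL_apply_norm, norm_mul,
    Real.norm_eq_abs, Real.norm_of_nonneg (by positivity), mul_assoc, ← Real.rpow_add_one hz',
    show p - 2 + 1 = p - 1 by ring]

lemma fderiv_fderiv_norm_rpow_apply (p : ℝ) (hz : z ≠ 0) (v w : E) :
    fderiv ℝ (fderiv ℝ (fun x : E ↦ ‖x‖ ^ p)) z v w =
      p * ((p - 2) * ‖z‖ ^ (p - 4) * inner ℝ z v * inner ℝ z w +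
        ‖z‖ ^ (p - 2) * inner ℝ v w) := by
  have first_derivative : fderiv ℝ (fun x : E ↦ ‖x‖ ^ p) =ᶠ[𝓝 z]
      fun x ↦ (p * ‖x‖ ^ (p - 2)) • innerSL ℝ x := by
    filter_upwards [isOpen_ne.mem_nhds hz] with x hx
    exact (hasFDerivAt_norm_rpow_of_ne_zero p hx).fderiv
  -- `innerSL ℝ` is typed as conjugate-linear; over `ℝ` it is linear by unfolding `starRingEnd ℝ`.
  let B : E →L[ℝ] E →L[ℝ] ℝ := innerSL ℝ
  have hB (u u' : E) : B u u' = inner ℝ u u' := rfl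
  have second_derivative : HasFDerivAt (fun x ↦ (p * ‖x‖ ^ (p - 2)) • B x) _ z :=
    ((hasFDerivAt_norm_rpow_of_ne_zero (p - 2) hz).const_mul p).fun_smul B.hasFDerivAt
  rw [first_derivative.fderiv_eq, second_derivative.fderiv, show p - 4 = p - 2 - 2 by ring]
  simp only [add_apply, smul_apply, ContinuousLinearMap.smulRight_apply, coe_innerSL_apply,
    smul_eq_mul, hB]
  ring

lemma norm_fderiv_fderiv_norm_rpow_le (p : ℝ) (hz : z ≠ 0) :
    ‖fderiv ℝ (fderiv ℝ (fun x : E ↦ ‖x‖ ^ p)) z‖ ≤ |p| * (|p - 2| + 1) * ‖z‖ ^ (p - 2) := by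
  refine ContinuousLinearMap.opNorm_le_bound₂ _ (by positivity) fun v w ↦ ?_
  have rpow_split : ‖z‖ ^ (p - 2) = ‖z‖ ^ (p - 4) * ‖z‖ ^ 2 := by
    rw [← Real.rpow_add_natCast (norm_ne_zero_iff.2 hz), Nat.cast_ofNat,
      show p - 4 + 2 = p - 2 by ring]
  rw [fderiv_fderiv_norm_rpow_apply p hz, Real.norm_eq_abs, abs_mul]
  calc |p| * |(p - 2) * ‖z‖ ^ (p - 4) * inner ℝ z v * inner ℝ z w + ‖z‖ ^ (p - 2) * inner ℝ v w|
      ≤ |p| * (|(p - 2) * ‖z‖ ^ (p - 4) * inner ℝ z v * inner ℝ z w| +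
          |‖z‖ ^ (p - 2) * inner ℝ v w|) := by gcongr; exact abs_add_le _ _
    _ = |p| * (|p - 2| * ‖z‖ ^ (p - 4) * |inner ℝ z v| * |inner ℝ z w| +
          ‖z‖ ^ (p - 2) * |inner ℝ v w|) := by
        simp only [abs_mul, Real.abs_rpow_of_nonneg (norm_nonneg z), abs_norm]
    _ ≤ |p| * (|p - 2| * ‖z‖ ^ (p - 4) * (‖z‖ * ‖v‖) * (‖z‖ * ‖w‖) +
          ‖z‖ ^ (p - 2) * (‖v‖ * ‖w‖)) := by gcongr <;> exact abs_real_inner_le_norm _ _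
    _ = |p| * (|p - 2| + 1) * ‖z‖ ^ (p - 2) * ‖v‖ * ‖w‖ := by rw [rpow_split]; ring

end NormRpow

section DifferenceKernel

variable {E : Type*} [NormedAddCommGroup E]

lemma fderiv_fderiv_mul_comp_sub_apply [NormedSpace ℝ E] {σ : E × E → ℝ} {k : E → ℝ} {q : E × E}
    (hσ : ContDiffAt ℝ 2 σ q) (hk : ContDiffAt ℝ 2 k (q.1 - q.2)) (v w : E × E) :
    fderiv ℝ (fderiv ℝ (fun q : E × E ↦ σ q * k (q.1 - q.2))) q v w =
      σ q * fderiv ℝ (fderiv ℝ k) (q.1 - q.2) (v.1 - v.2) (w.1 - w.2) +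
        fderiv ℝ σ q v * fderiv ℝ k (q.1 - q.2) (w.1 - w.2) +
        fderiv ℝ σ q w * fderiv ℝ k (q.1 - q.2) (v.1 - v.2) +
        fderiv ℝ (fderiv ℝ σ) q v w * k (q.1 - q.2) := by
  let δ : E × E →L[ℝ] E := .fst ℝ E E - .snd ℝ E E
  have hkδ : ContDiffAt ℝ 2 (fun q ↦ k (δ q)) q := ContDiffAt.comp q hk δ.contDiff.contDiffAt
  have hDk : fderiv ℝ (fun q ↦ k (δ q)) q = (fderiv ℝ k (δ q)).comp δ :=
    ((hk.differentiableAt two_ne_zero).hasFDerivAt.comp q δ.hasFDerivAt).fderiv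
  have product_rule := fderiv_fderiv_smul_apply hσ hkδ v w
  simp only [smul_eq_mul] at product_rule
  rwa [fderiv_fderiv_comp_continuousLinearMap_apply δ hk, hDk] at product_rule

lemma abs_fderiv_fderiv_mul_comp_sub_apply_le [NormedSpace ℝ E] {σ : E × E → ℝ} {k : E → ℝ}
    {q v w : E × E} {M R κ₀ κ₁ κ₂ : ℝ} {K : NNReal}
    (hσ : ContDiffAt ℝ 2 σ q) (hk : ContDiffAt ℝ 2 k (q.1 - q.2))
    (hσ₀ : |σ q| ≤ M) (hσ₁ : ‖fderiv ℝ σ q‖ ≤ M) (hσ₂ : ‖fderiv ℝ (fderiv ℝ σ) q‖ ≤ M)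
    (hk₀ : |k (q.1 - q.2)| ≤ κ₀) (hk₁ : ‖fderiv ℝ k (q.1 - q.2)‖ * ‖q.1 - q.2‖ ≤ κ₁)
    (hk₂ : ‖fderiv ℝ (fderiv ℝ k) (q.1 - q.2)‖ * ‖q.1 - q.2‖ ^ 2 ≤ κ₂)
    (hv : ‖v‖ ≤ R) (hw : ‖w‖ ≤ R) (hv' : ‖v.1 - v.2‖ ≤ K * ‖q.1 - q.2‖)
    (hw' : ‖w.1 - w.2‖ ≤ K * ‖q.1 - q.2‖) :
    |fderiv ℝ (fderiv ℝ (fun q : E × E ↦ σ q * k (q.1 - q.2))) q v w| ≤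
      M * (κ₂ * K ^ 2 + 2 * κ₁ * K * R + κ₀ * R ^ 2) := by
  have hM : 0 ≤ M := (abs_nonneg _).trans hσ₀
  have hR : 0 ≤ R := (norm_nonneg _).trans hv
  have hDσ {u : E × E} (hu : ‖u‖ ≤ R) : |fderiv ℝ σ q u| ≤ M * R :=
    (fderiv ℝ σ q).le_of_opNorm_le_of_le hσ₁ hu
  have hD2σ : |fderiv ℝ (fderiv ℝ σ) q v w| ≤ M * R * R :=
    (fderiv ℝ (fderiv ℝ σ) q).le_of_opNorm₂_le_of_le hσ₂ hv hw
  have hDk {u : E} (hu : ‖u‖ ≤ K * ‖q.1 - q.2‖) : |fderiv ℝ k (q.1 - q.2) u| ≤ κ₁ * K :=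
    calc |fderiv ℝ k (q.1 - q.2) u|
        ≤ ‖fderiv ℝ k (q.1 - q.2)‖ * (K * ‖q.1 - q.2‖) :=
          (fderiv ℝ k (q.1 - q.2)).le_opNorm_of_le hu
      _ = ‖fderiv ℝ k (q.1 - q.2)‖ * ‖q.1 - q.2‖ * K := by ring
      _ ≤ κ₁ * K := by gcongr
  have hD2k : |fderiv ℝ (fderiv ℝ k) (q.1 - q.2) (v.1 - v.2) (w.1 - w.2)| ≤ κ₂ * K ^ 2 :=
    calc |fderiv ℝ (fderiv ℝ k) (q.1 - q.2) (v.1 - v.2) (w.1 - w.2)|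
        ≤ ‖fderiv ℝ (fderiv ℝ k) (q.1 - q.2)‖ * (K * ‖q.1 - q.2‖) * (K * ‖q.1 - q.2‖) :=
          (fderiv ℝ (fderiv ℝ k) (q.1 - q.2)).le_of_opNorm₂_le_of_le le_rfl hv' hw'
      _ = ‖fderiv ℝ (fderiv ℝ k) (q.1 - q.2)‖ * ‖q.1 - q.2‖ ^ 2 * K ^ 2 := by ring
      _ ≤ κ₂ * K ^ 2 := by gcongr
  rw [fderiv_fderiv_mul_comp_sub_apply hσ hk]
  calc _ ≤ M * (κ₂ * K ^ 2) + M * R * (κ₁ * K) + M * R * (κ₁ * K) + M * R * R * κ₀ := by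
        refine (abs_add_le _ _).trans (add_le_add ((abs_add_three _ _ _).trans ?_) ?_) <;>
          simp only [abs_mul] <;> gcongr
        exacts [hDσ hv, hDk hw', hDσ hw, hDk hv']
    _ = M * (κ₂ * K ^ 2 + 2 * κ₁ * K * R + κ₀ * R ^ 2) := by ring

-- The norm on `E × E →L[ℝ] E × E →L[ℝ] ℝ` is not found at the default depth.
set_option maxSynthPendingDepth 3 in
lemma abs_fderiv_fderiv_mul_norm_sub_rpow_apply_le [InnerProductSpace ℝ E] {σ : E × E → ℝ}
    {q v w : E × E} {M R : ℝ} {K : NNReal} (p : ℝ) (hq : q.1 ≠ q.2) (hσ : ContDiffAt ℝ 2 σ q)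
    (hσ₀ : |σ q| ≤ M) (hσ₁ : ‖fderiv ℝ σ q‖ ≤ M) (hσ₂ : ‖fderiv ℝ (fderiv ℝ σ) q‖ ≤ M)
    (hv : ‖v‖ ≤ R) (hw : ‖w‖ ≤ R) (hv' : ‖v.1 - v.2‖ ≤ K * ‖q.1 - q.2‖)
    (hw' : ‖w.1 - w.2‖ ≤ K * ‖q.1 - q.2‖) :
    |fderiv ℝ (fderiv ℝ (fun q : E × E ↦ σ q * ‖q.1 - q.2‖ ^ p)) q v w| ≤
      M * (|p| * (|p - 2| + 1) * K ^ 2 + 2 * |p| * K * R + R ^ 2) * ‖q.1 - q.2‖ ^ p := by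
  have hz : q.1 - q.2 ≠ 0 := sub_ne_zero.2 hq
  have hz' : ‖q.1 - q.2‖ ≠ 0 := norm_ne_zero_iff.2 hz
  have h₀ : |‖q.1 - q.2‖ ^ p| ≤ ‖q.1 - q.2‖ ^ p := (abs_of_nonneg (by positivity)).le
  have h₁ : ‖fderiv ℝ (fun x : E ↦ ‖x‖ ^ p) (q.1 - q.2)‖ * ‖q.1 - q.2‖ ≤
      |p| * ‖q.1 - q.2‖ ^ p := by
    rw [norm_fderiv_norm_rpow_of_ne_zero p hz, mul_assoc, ← Real.rpow_add_one hz', sub_add_cancel]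
  have h₂ : ‖fderiv ℝ (fderiv ℝ (fun x : E ↦ ‖x‖ ^ p)) (q.1 - q.2)‖ * ‖q.1 - q.2‖ ^ 2 ≤
      |p| * (|p - 2| + 1) * ‖q.1 - q.2‖ ^ p :=
    calc _ ≤ |p| * (|p - 2| + 1) * ‖q.1 - q.2‖ ^ (p - 2) * ‖q.1 - q.2‖ ^ 2 := by
          gcongr; exact norm_fderiv_fderiv_norm_rpow_le p hz
      _ = |p| * (|p - 2| + 1) * ‖q.1 - q.2‖ ^ p := by
          rw [mul_assoc, ← Real.rpow_add_natCast hz', Nat.cast_ofNat, sub_add_cancel]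
  refine (abs_fderiv_fderiv_mul_comp_sub_apply_le hσ (contDiffAt_norm_rpow_of_ne_zero p hz)
    hσ₀ hσ₁ hσ₂ h₀ h₁ h₂ hv hw hv' hw').trans_eq ?_
  ring

set_option maxSynthPendingDepth 3 in
theorem stmt_9_general [InnerProductSpace ℝ E] (p : ℝ) {σ : E × E → ℝ} {V W : E → E} {M R : ℝ}
    {K : NNReal} (hσ : ∀ q : E × E, q.1 ≠ q.2 → ContDiffAt ℝ 2 σ q)
    (hσ₀ : ∀ q : E × E, q.1 ≠ q.2 → |σ q| ≤ M)
    (hσ₁ : ∀ q : E × E, q.1 ≠ q.2 → ‖fderiv ℝ σ q‖ ≤ M)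
    (hσ₂ : ∀ q : E × E, q.1 ≠ q.2 → ‖fderiv ℝ (fderiv ℝ σ) q‖ ≤ M)
    (hV : ∀ x, ‖V x‖ ≤ R) (hW : ∀ x, ‖W x‖ ≤ R)
    (hVL : LipschitzWith K V) (hWL : LipschitzWith K W) :
    ∃ C : ℝ, 0 < C ∧ ∀ x y : E, x ≠ y →
      |fderiv ℝ (fderiv ℝ (fun q : E × E ↦ σ q / ‖q.1 - q.2‖ ^ p)) (x, y) (V x, V y) (W x, W y)|
        * ‖x - y‖ ^ p ≤ C := by
  let B : ℝ := M * (|-p| * (|-p - 2| + 1) * K ^ 2 + 2 * |-p| * K * R + R ^ 2)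
  refine ⟨|B| + 1, by positivity, fun x y hxy ↦ ?_⟩
  have hr : 0 < ‖x - y‖ := norm_pos_iff.2 (sub_ne_zero.2 hxy)
  simp only [div_eq_mul_inv, ← Real.rpow_neg (norm_nonneg _)]
  calc _ ≤ B * ‖x - y‖ ^ (-p) * ‖x - y‖ ^ p := by
        gcongr
        exact abs_fderiv_fderiv_mul_norm_sub_rpow_apply_le (-p) hxy (hσ (x, y) hxy)
          (hσ₀ (x, y) hxy) (hσ₁ (x, y) hxy) (hσ₂ (x, y) hxy)
          (max_le (hV x) (hV y)) (max_le (hW x) (hW y)) (hVL.norm_sub_le x y) (hWL.norm_sub_le x y)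
    _ = B := by rw [mul_assoc, ← Real.rpow_add hr, neg_add_cancel, Real.rpow_zero, mul_one]
    _ ≤ |B| + 1 := (le_abs_self B).trans (le_add_of_nonneg_right zero_le_one)

end DifferenceKernel

/-- Second-order kernel estimate: for `γ(x,y) = σ(x,y)/‖x−y‖^{d+2s}` with
`σ ≥ 0` of class `C²` with `σ` and its first and second derivatives bounded, and bounded
Lipschitz vector fields `V`, `W`, there is `C > 0` such that for all `x ≠ y` the second
derivative of `γ` at `(x,y)`, as a bilinear form on `ℝ^d × ℝ^d`, satisfies
`|D²γ(x,y)[(V x, V y), (W x, W y)]| · ‖x−y‖^{d+2s} ≤ C`. -/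
theorem stmt_9 (d : ℕ) (s : ℝ) (hs : s ∈ Set.Ioo (0:ℝ) 1)
    (σ : EuclideanSpace ℝ (Fin d) × EuclideanSpace ℝ (Fin d) → ℝ)
    (hσ0 : ∀ q, 0 ≤ σ q) (hσ : ContDiff ℝ 2 σ)
    (M : ℝ) (hσb : ∀ q, |σ q| ≤ M) (hσd1 : ∀ q, ‖fderiv ℝ σ q‖ ≤ M)
    (hσd2 : ∀ q, ‖fderiv ℝ (fderiv ℝ σ) q‖ ≤ M)
    (V W : EuclideanSpace ℝ (Fin d) → EuclideanSpace ℝ (Fin d))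
    (MV : ℝ) (hVb : ∀ x, ‖V x‖ ≤ MV) (hWb : ∀ x, ‖W x‖ ≤ MV)
    (K : NNReal) (hVL : LipschitzWith K V) (hWL : LipschitzWith K W) :
    ∃ C : ℝ, 0 < C ∧ ∀ x y : EuclideanSpace ℝ (Fin d), x ≠ y →
      |fderiv ℝ
          (fderiv ℝ (fun q : EuclideanSpace ℝ (Fin d) × EuclideanSpace ℝ (Fin d) =>
            σ q / ‖q.1 - q.2‖ ^ ((d:ℝ) + 2*s)))
          (x, y) (V x, V y) (W x, W y)|
        * ‖x - y‖ ^ ((d:ℝ) + 2*s) ≤ C := by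
  exact stmt_9_general ((d : ℝ) + 2 * s) (fun q _ ↦ hσ.contDiffAt) (fun q _ ↦ hσb q)
    (fun q _ ↦ hσd1 q) (fun q _ ↦ hσd2 q) hVb hWb hVL hWL
end

section
/- Let Ω ⊂ ℝ^d be open and bounded, let f : ℝ^d → ℝ be continuously differentiable, let W : ℝ^d → ℝ^d be a continuously differentiable vector field with compact support contained in Ω, and let v ∈ L¹(Ω). Define Φ(t) := ∫_Ω f(x + tW(x)) v(x) det( Id + t·DW(x) ) dx for t ≥ 0. Then Φ is differentiable at t = 0 from the right with Φ'(0) = ∫_Ω ( ∇f(x)·W(x) + f(x) div W(x) ) v(x) dx. -/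
open MeasureTheory Filter Topology

/-!
The integrand of `Φ`, apart from the factor `v`, is the `C¹` function `(y, L) ↦ f y * det L`
evaluated along the line `t ↦ (x, Id) + t • (W x, DW x)`, whose base point and direction depend
continuously on `x`. Its `t`-derivative is therefore jointly continuous in `(t, x)`, hence bounded
for `t` near `0` and `x` in the compact closure of `Ω`, and dominated convergence allows
differentiation under the integral sign. The divergence term appears because the derivative of the
determinant at the identity is the trace.
-/

section LeibnizRule

variable {𝕜 X G : Type*} [RCLike 𝕜] [TopologicalSpace X] [MeasurableSpace X]
  [OpensMeasurableSpace X] [NormedAddCommGroup G] [NormedSpace 𝕜 G]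
  {μ : Measure X} {K : Set X} {v : X → G}

lemma integrable_smul_of_continuous_of_ae_mem_isCompact {g : X → 𝕜} (hK : IsCompact K)
    (hμK : ∀ᵐ x ∂μ, x ∈ K) (hg : Continuous g) (hv : Integrable v μ) :
    Integrable (fun x => g x • v x) μ := by
  obtain ⟨C, hC⟩ := hK.exists_bound_of_continuousOn hg.continuousOn
  exact hv.bdd_smul C hg.aestronglyMeasurable (hμK.mono hC)

variable [NormedSpace ℝ G]

theorem hasDerivAt_integral_smul_of_ae_mem_isCompact {g g' : 𝕜 → X → 𝕜} (hK : IsCompact K)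
    (hμK : ∀ᵐ x ∂μ, x ∈ K) (hg : ∀ t, Continuous (g t)) (hg' : Continuous (Function.uncurry g'))
    (hgg' : ∀ t x, HasDerivAt (g · x) (g' t x) t) (hv : Integrable v μ) (t₀ : 𝕜) :
    HasDerivAt (fun t => ∫ x, g t x • v x ∂μ) (∫ x, g' t₀ x • v x ∂μ) t₀ := by
  obtain ⟨C, hC⟩ := ((isCompact_closedBall t₀ 1).prod hK).exists_bound_of_continuousOn
    hg'.continuousOn
  have hbound : ∀ᵐ x ∂μ, ∀ t ∈ Metric.closedBall t₀ 1, ‖g' t x • v x‖ ≤ C * ‖v x‖ := by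
    filter_upwards [hμK] with x hx t ht
    rw [norm_smul]
    gcongr
    exact hC (t, x) ⟨ht, hx⟩
  exact (hasDerivAt_integral_of_dominated_loc_of_deriv_le
    (Metric.closedBall_mem_nhds t₀ one_pos)
    (.of_forall fun t => (hg t).aestronglyMeasurable.smul hv.aestronglyMeasurable)
    (integrable_smul_of_continuous_of_ae_mem_isCompact hK hμK (hg t₀) hv)
    ((hg'.uncurry_left t₀).aestronglyMeasurable.smul hv.aestronglyMeasurable)
    hbound (hv.norm.const_mul C)
    (.of_forall fun x t _ => (hgg' t x).smul_const (v x))).2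

theorem hasDerivAt_integral_comp_add_smul {V : Type*} [NormedAddCommGroup V] [NormedSpace 𝕜 V]
    {h : V → 𝕜} {a b : X → V} (hK : IsCompact K) (hμK : ∀ᵐ x ∂μ, x ∈ K) (hh : ContDiff 𝕜 1 h)
    (ha : Continuous a) (hb : Continuous b) (hv : Integrable v μ) (t₀ : 𝕜) :
    HasDerivAt (fun t => ∫ x, h (a x + t • b x) • v x ∂μ)
      (∫ x, fderiv 𝕜 h (a x + t₀ • b x) (b x) • v x ∂μ) t₀ := by
  have hderiv_cont : Continuous fun p : 𝕜 × X =>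
      fderiv 𝕜 h (a p.2 + p.1 • b p.2) (b p.2) :=
    ((hh.continuous_fderiv one_ne_zero).comp (by fun_prop)).clm_apply (hb.comp continuous_snd)
  refine hasDerivAt_integral_smul_of_ae_mem_isCompact
    (g' := fun t x => fderiv 𝕜 h (a x + t • b x) (b x)) hK hμK
    (fun t => hh.continuous.comp (by fun_prop)) hderiv_cont (fun t x => ?_) hv t₀
  have hline : HasDerivAt (fun t : 𝕜 => a x + t • b x) (b x) t := by
    simpa using ((hasDerivAt_id t).smul_const (b x)).const_add (a x)
  exact (hh.differentiable one_ne_zero _).hasFDerivAt.comp_hasDerivAt t hline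

end LeibnizRule

section Determinant

lemma exists_det_one_add_smul_eq {R M : Type*} [CommRing R] [AddCommGroup M] [Module R M]
    [Module.Free R M] [Module.Finite R M] (A : M →ₗ[R] M) :
    ∃ p : Polynomial R, ∀ r : R,
      LinearMap.det (1 + r • A) = 1 + LinearMap.trace R M A * r + p.eval r * r ^ 2 := by
  classical
  let b := Module.Free.chooseBasis R M
  let B := LinearMap.toMatrix b b A
  refine ⟨(1 + (Polynomial.X : Polynomial R) • B.map Polynomial.C).det.divX.divX, fun r => ?_⟩
  rw [LinearMap.trace_eq_matrix_trace R b, ← Matrix.det_one_add_smul, ← LinearMap.det_toMatrix b,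
    map_add, map_smul, LinearMap.toMatrix_one]

variable {𝕜 E : Type*} [NontriviallyNormedField 𝕜] [NormedAddCommGroup E] [NormedSpace 𝕜 E]
  [FiniteDimensional 𝕜 E]

lemma contDiff_det [CompleteSpace 𝕜] {n : WithTop ℕ∞} :
    ContDiff 𝕜 n (fun L : E →L[𝕜] E => L.det) := by
  let b := Module.finBasis 𝕜 E
  have leibniz_formula (L : E →L[𝕜] E) :
      L.det = ∑ σ, ((Equiv.Perm.sign σ : ℤ) : 𝕜) * ∏ i, b.coord (σ i) (L (b i)) := by
    rw [ContinuousLinearMap.det, ← LinearMap.det_toMatrix b, Matrix.det_apply']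
    simp only [LinearMap.toMatrix_apply, ContinuousLinearMap.coe_coe, Module.Basis.coord_apply]
  simp_rw [leibniz_formula]
  refine ContDiff.sum fun σ _ => contDiff_const.mul (contDiff_prod fun i _ => ?_)
  exact (b.coord (σ i)).toContinuousLinearMap.contDiff.comp
    (ContinuousLinearMap.apply 𝕜 E (b i)).contDiff

lemma hasLineDerivAt_det_id (A : E →L[𝕜] E) :
    HasLineDerivAt 𝕜 (fun L : E →L[𝕜] E => L.det) (LinearMap.trace 𝕜 E A.toLinearMap)
      (ContinuousLinearMap.id 𝕜 E) A := by
  obtain ⟨p, hp⟩ := exists_det_one_add_smul_eq A.toLinearMap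
  have hlin : HasDerivAt (fun t : 𝕜 => 1 + LinearMap.trace 𝕜 E A.toLinearMap * t)
      (LinearMap.trace 𝕜 E A.toLinearMap) 0 := by
    simpa using ((hasDerivAt_id (0 : 𝕜)).const_mul
      (LinearMap.trace 𝕜 E A.toLinearMap)).const_add 1
  have hquad : HasDerivAt (fun t : 𝕜 => p.eval t * t ^ 2) 0 0 := by
    simpa using (p.hasDerivAt 0).fun_mul (hasDerivAt_pow 2 (0 : 𝕜))
  exact ((hlin.fun_add hquad).congr_deriv (add_zero _)).congr_of_eventuallyEq (.of_forall hp)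

lemma fderiv_det_id [CompleteSpace 𝕜] (A : E →L[𝕜] E) :
    fderiv 𝕜 (fun L : E →L[𝕜] E => L.det) (ContinuousLinearMap.id 𝕜 E) A =
      LinearMap.trace 𝕜 E A.toLinearMap :=
  ((contDiff_det.differentiable one_ne_zero _).hasFDerivAt.hasLineDerivAt A).unique
    (hasLineDerivAt_det_id A)

lemma fderiv_mul_det_id [CompleteSpace 𝕜] {V : Type*} [NormedAddCommGroup V] [NormedSpace 𝕜 V]
    {f : V → 𝕜} {x : V} (hf : DifferentiableAt 𝕜 f x) (w : V) (A : E →L[𝕜] E) :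
    fderiv 𝕜 (fun p : V × (E →L[𝕜] E) => f p.1 * p.2.det) (x, ContinuousLinearMap.id 𝕜 E) (w, A) =
      fderiv 𝕜 f x w + f x * LinearMap.trace 𝕜 E A.toLinearMap := by
  have hf_fst : HasFDerivAt (fun p : V × (E →L[𝕜] E) => f p.1)
      (fderiv 𝕜 f x ∘L ContinuousLinearMap.fst 𝕜 V (E →L[𝕜] E)) (x, ContinuousLinearMap.id 𝕜 E) :=
    HasFDerivAt.comp (g := f) _ hf.hasFDerivAt hasFDerivAt_fst
  have hdet_snd : HasFDerivAt (fun p : V × (E →L[𝕜] E) => p.2.det)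
      (fderiv 𝕜 (fun L : E →L[𝕜] E => L.det) (ContinuousLinearMap.id 𝕜 E) ∘L
        ContinuousLinearMap.snd 𝕜 V (E →L[𝕜] E)) (x, ContinuousLinearMap.id 𝕜 E) :=
    HasFDerivAt.comp (g := fun L : E →L[𝕜] E => L.det) _
      (contDiff_det.differentiable one_ne_zero _).hasFDerivAt hasFDerivAt_snd
  have hdet_id : (ContinuousLinearMap.id 𝕜 E).det = 1 := LinearMap.det_id
  rw [(hf_fst.fun_mul hdet_snd).fderiv]
  simp [fderiv_det_id, hdet_id, add_comm]

end Determinant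

theorem stmt_15_general {E G : Type*} [NormedAddCommGroup E] [NormedSpace ℝ E]
    [FiniteDimensional ℝ E] [MeasurableSpace E] [OpensMeasurableSpace E]
    [NormedAddCommGroup G] [NormedSpace ℝ G] [CompleteSpace G] {μ : Measure E} {Ω : Set E}
    (hΩ : Bornology.IsBounded Ω) {f : E → ℝ} (hf : ContDiff ℝ 1 f)
    {W : E → E} (hW : ContDiff ℝ 1 W) {v : E → G} (hv : IntegrableOn v Ω μ) :
    HasDerivAt
      (fun t : ℝ => ∫ x in Ω, (f (x + t • W x) *
        LinearMap.det ((ContinuousLinearMap.id ℝ E + t • fderiv ℝ W x).toLinearMap)) • v x ∂μ)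
      (∫ x in Ω, (fderiv ℝ f x (W x)
        + f x * LinearMap.trace ℝ E (fderiv ℝ W x).toLinearMap) • v x ∂μ) 0 := by
  have hΩ_mem : ∀ᵐ x ∂μ.restrict Ω, x ∈ closure Ω :=
    ae_restrict_of_ae_restrict_of_subset subset_closure
      (ae_restrict_mem isClosed_closure.measurableSet)
  have hfdet : ContDiff ℝ 1 (fun p : E × (E →L[ℝ] E) => f p.1 * p.2.det) :=
    (hf.comp contDiff_fst).mul (contDiff_det.comp contDiff_snd)
  have hDW : Continuous (fderiv ℝ W) := hW.continuous_fderiv one_ne_zero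
  have hderiv := hasDerivAt_integral_comp_add_smul hΩ.isCompact_closure hΩ_mem hfdet
    (a := fun x => (x, ContinuousLinearMap.id ℝ E)) (b := fun x => (W x, fderiv ℝ W x))
    (by fun_prop) (hW.continuous.prodMk hDW) hv 0
  simp only [zero_smul, add_zero, fderiv_mul_det_id (hf.differentiable one_ne_zero _)] at hderiv
  exact hderiv

/-- Shape derivative of the pulled-back forcing pairing: for
`Φ(t) = ∫_Ω f(x + tW(x)) v(x) det(Id + t·DW(x)) dx` with `f` of class `C¹`, `W` a `C¹`
vector field with compact support in the open bounded set `Ω` and `v ∈ L¹(Ω)`, the map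
`Φ` is right-differentiable at `t = 0` with
`Φ'(0) = ∫_Ω (∇f(x)·W(x) + f(x) div W(x)) v(x) dx`. -/
theorem stmt_15 (d : ℕ) (Ω : Set (EuclideanSpace ℝ (Fin d)))
    (hΩo : IsOpen Ω) (hΩb : Bornology.IsBounded Ω)
    (f : EuclideanSpace ℝ (Fin d) → ℝ) (hf : ContDiff ℝ 1 f)
    (W : EuclideanSpace ℝ (Fin d) → EuclideanSpace ℝ (Fin d)) (hW : ContDiff ℝ 1 W)
    (hWc : HasCompactSupport W) (hWs : tsupport W ⊆ Ω)
    (v : EuclideanSpace ℝ (Fin d) → ℝ) (hv : IntegrableOn v Ω) :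
    HasDerivWithinAt
      (fun t : ℝ => ∫ x in Ω, f (x + t • W x) * v x *
        LinearMap.det
          ((ContinuousLinearMap.id ℝ (EuclideanSpace ℝ (Fin d))
            + t • fderiv ℝ W x).toLinearMap))
      (∫ x in Ω, (fderiv ℝ f x (W x)
        + f x * LinearMap.trace ℝ _ (fderiv ℝ W x).toLinearMap) * v x)
      (Set.Ici 0) 0 := by
  simpa only [smul_eq_mul, mul_right_comm] using
    (stmt_15_general hΩb hf hW hv).hasDerivWithinAt
end
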